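/- arXiv:1603.00180 — 2 statements merged into one kernel-verified Lean document; each statement's English description precedes it below -/
import Mathlib

section
/- Let X be a set, let f_k : X → ℝ be a sequence of real-valued functions, let f : X → ℝ, and let r ≥ 0 be a real number. If (f_k) is pointwise rough statistically convergent to f on X with roughness degree r, then (f_k) is pointwise rough statistically Cauchy on X with roughness degree 2r; that is, for every x ∈ X and every ε > 0 there exists N ∈ ℕ such that the set {k ∈ ℕ : |f_k(x) − f_N(x)| ≥ 2r + ε} has natural density 0. -/
open scoped Classical

/-- The set `A ⊆ ℕ` has natural density `d`. -/
def natDensity (A : Set ℕ) (d : ℝ) : Prop :=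
  Filter.Tendsto
    (fun n => (((Finset.range n).filter (fun k => k ∈ A)).card : ℝ) / (n : ℝ))
    Filter.atTop (nhds d)

namespace natDensity

variable {A B : Set ℕ} {d : ℝ}

theorem univ : natDensity Set.univ 1 := by
  refine tendsto_const_nhds.congr' ?_
  filter_upwards [Filter.eventually_ne_atTop 0] with n hn
  simp [hn]

theorem exists_notMem (hA : natDensity A d) (hd : d ≠ 1) : ∃ n, n ∉ A := by
  by_contra! hmem
  rw [Set.eq_univ_of_forall hmem] at hA
  exact hd (tendsto_nhds_unique hA univ)

theorem zero_of_subset (hB : natDensity B 0) (hAB : A ⊆ B) : natDensity A 0 := by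
  refine squeeze_zero (fun n => by positivity) (fun n => ?_) hB
  gcongr

end natDensity

section RoughStatistical

variable {Y : Type*} [PseudoMetricSpace Y]

/-- Rough statistical convergence of the sequence `u` to `a` with roughness degree `r`. The
pointwise notion for functions `f k` is this one for each sequence `fun k => f k x`. -/
def RoughStatTendsto (u : ℕ → Y) (r : ℝ) (a : Y) : Prop :=
  ∀ ε > 0, natDensity {k | r + ε ≤ dist (u k) a} 0

/-- The rough statistical Cauchy property of the sequence `u` with roughness degree `r`. The
reference index `N` may depend on `ε`. -/
def RoughStatCauchy (u : ℕ → Y) (r : ℝ) : Prop :=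
  ∀ ε > 0, ∃ N, natDensity {k | r + ε ≤ dist (u k) (u N)} 0

variable {u : ℕ → Y} {r : ℝ} {a : Y}

theorem RoughStatTendsto.exists_dist_lt (hu : RoughStatTendsto u r a) {ε : ℝ} (hε : 0 < ε) :
    ∃ N, dist (u N) a < r + ε := by
  simpa only [Set.mem_ofPred_eq, not_le] using (hu ε hε).exists_notMem zero_ne_one

theorem stmt_3_general (hu : RoughStatTendsto u r a) : RoughStatCauchy u (2 * r) := by
  intro ε hε
  obtain ⟨N, hN⟩ := hu.exists_dist_lt (half_pos hε)
  refine ⟨N, (hu (ε / 2) (half_pos hε)).zero_of_subset fun k hk => ?_⟩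
  have hfar : 2 * r + ε ≤ dist (u k) (u N) := hk
  have htriangle : dist (u k) (u N) ≤ dist (u k) a + dist (u N) a := dist_triangle_right _ _ _
  change r + ε / 2 ≤ dist (u k) a
  linarith

end RoughStatistical

theorem stmt_3 {X : Type*} (f : ℕ → X → ℝ) (F : X → ℝ) (r : ℝ) (hr : 0 ≤ r)
    (hf : ∀ x : X, ∀ ε > (0 : ℝ), natDensity {k : ℕ | r + ε ≤ |f k x - F x|} 0) :
    ∀ x : X, ∀ ε > (0 : ℝ),
      ∃ N : ℕ, natDensity {k : ℕ | 2 * r + ε ≤ |f k x - f N x|} 0 :=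
  fun x => stmt_3_general (u := fun k => f k x) (a := F x) (hf x)
end

section
/- Let x_k be a sequence of real numbers and let r ≥ 0 be a real number. If (x_k) is rough statistically Cauchy with roughness degree r (i.e., for every ε > 0 there exists N ∈ ℕ such that the set {k ∈ ℕ : |x_k − x_N| ≥ r + ε} has natural density 0), then there exists a real number ξ such that (x_k) is rough statistically convergent to ξ with roughness degree 2r (i.e., for every ε > 0 the set {k ∈ ℕ : |x_k − ξ| ≥ 2r + ε} has natural density 0). -/
open scoped Classical

/-!
The sets whose complement has natural density zero form a proper filter on `ℕ`, so only a statement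
about a proper filter is at stake. Let `c ε` be a centre such that eventually `x k` is within
`r + ε` of `c ε`. Any two of the balls around these centres share a term of the sequence, so for
small `ε` the centres are bounded, and by compactness they cluster at some `ξ` as `ε → 0`. Moving
the centre from `c ε` to `ξ` costs an arbitrarily small amount, so the roughness degree `r` is
even preserved.
-/

open Filter Topology

section NatDensity

variable {A B : Set ℕ}

theorem natDensity_empty : natDensity ∅ 0 := by
  simp [natDensity]

theorem natDensity_univ : natDensity Set.univ 1 := by
  refine tendsto_const_nhds.congr' ?_
  filter_upwards [eventually_ne_atTop 0] with n hn
  simp [hn]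

theorem natDensity_zero_mono (hAB : A ⊆ B) (hB : natDensity B 0) : natDensity A 0 := by
  refine squeeze_zero (fun n => by positivity) (fun n => ?_) hB
  gcongr

theorem natDensity_zero_union (hA : natDensity A 0) (hB : natDensity B 0) :
    natDensity (A ∪ B) 0 := by
  refine squeeze_zero (fun n => by positivity) (fun n => ?_) (by simpa using hA.add hB)
  simp only [Set.mem_union, Finset.filter_or, ← add_div]
  gcongr
  exact_mod_cast Finset.card_union_le _ _

/-- The filter on `ℕ` of sets of natural density one, given by their null complements: statistical
convergence is convergence along this filter. -/
def densityOneFilter : Filter ℕ :=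
  comk (natDensity · 0) natDensity_empty (fun _ hB _ hAB => natDensity_zero_mono hAB hB)
    (fun _ hA _ hB => natDensity_zero_union hA hB)

theorem eventually_densityOneFilter {p : ℕ → Prop} :
    (∀ᶠ k in densityOneFilter, p k) ↔ natDensity {k | ¬p k} 0 :=
  Iff.rfl

instance densityOneFilter_neBot : densityOneFilter.NeBot := by
  refine ⟨fun h_bot => zero_ne_one (α := ℝ) ?_⟩
  have h_univ : natDensity Set.univ 0 := by
    simpa using eventually_densityOneFilter.mp (eventually_false_iff_eq_bot.mpr h_bot)
  exact tendsto_nhds_unique h_univ natDensity_univ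

end NatDensity

section RoughLimit

variable {ι X : Type*} [PseudoMetricSpace X] {l : Filter ι} [l.NeBot] {f : ι → X}

theorem dist_lt_add_of_eventually_dist_lt {a b : X} {s t : ℝ}
    (ha : ∀ᶠ k in l, dist (f k) a < s) (hb : ∀ᶠ k in l, dist (f k) b < t) :
    dist a b < s + t := by
  obtain ⟨k, hka, hkb⟩ := (ha.and hb).exists
  linarith [dist_triangle_left a b (f k)]

theorem exists_forall_eventually_dist_lt [ProperSpace X] {r : ℝ}
    (h : ∀ ε > 0, ∃ c, ∀ᶠ k in l, dist (f k) c < r + ε) :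
    ∃ ξ, ∀ ε > 0, ∀ᶠ k in l, dist (f k) ξ < r + ε := by
  have : Nonempty X := (h 1 one_pos).nonempty
  choose! c hc using h
  have h_bounded : ∀ᶠ δ in 𝓝[>] (0 : ℝ), c δ ∈ Metric.closedBall (c 1) (r + 1 + (r + 1)) := by
    filter_upwards [Ioc_mem_nhdsGT one_pos] with δ ⟨hδ_pos, hδ_le⟩
    have h_dist := dist_lt_add_of_eventually_dist_lt (hc δ hδ_pos) (hc 1 one_pos)
    exact Metric.mem_closedBall.mpr (by linarith)
  obtain ⟨ξ, -, hξ⟩ := (isCompact_closedBall _ _).exists_mapClusterPt_of_frequently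
    h_bounded.frequently
  refine ⟨ξ, fun ε hε => ?_⟩
  have h_near : ∃ᶠ δ in 𝓝[>] (0 : ℝ), dist (c δ) ξ < ε / 2 :=
    hξ.frequently (Metric.ball_mem_nhds ξ (half_pos hε))
  obtain ⟨δ, hδξ, hδ_pos, hδ_lt⟩ :=
    (h_near.and_eventually (Ioo_mem_nhdsGT (half_pos hε))).exists
  filter_upwards [hc δ hδ_pos] with k hk
  linarith [dist_triangle (f k) (c δ) ξ]

end RoughLimit

theorem stmt_4_general {X : Type*} [PseudoMetricSpace X] [ProperSpace X] (x : ℕ → X) (r : ℝ)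
    (hx : ∀ ε > (0 : ℝ), ∃ c : X, natDensity {k : ℕ | r + ε ≤ dist (x k) c} 0) :
    ∃ ξ : X, ∀ ε > (0 : ℝ), natDensity {k : ℕ | r + ε ≤ dist (x k) ξ} 0 := by
  simp only [← not_lt, ← eventually_densityOneFilter] at hx ⊢
  exact exists_forall_eventually_dist_lt hx

theorem stmt_4 (x : ℕ → ℝ) (r : ℝ) (hr : 0 ≤ r)
    (hx : ∀ ε > (0 : ℝ), ∃ N : ℕ, natDensity {k : ℕ | r + ε ≤ |x k - x N|} 0) :
    ∃ ξ : ℝ, ∀ ε > (0 : ℝ), natDensity {k : ℕ | 2 * r + ε ≤ |x k - ξ|} 0 := by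
  obtain ⟨ξ, hξ⟩ := stmt_4_general x r fun ε hε => (hx ε hε).imp' x fun _ hN => hN
  refine ⟨ξ, fun ε hε => natDensity_zero_mono (fun k hk => ?_) (hξ ε hε)⟩
  exact (show r + ε ≤ 2 * r + ε by linarith).trans hk
end
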